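/- arXiv:1912.10932 — 4 statements merged into one kernel-verified Lean document; each statement's English description precedes it below -/
import Mathlib

section
/- Let f : A → A' be a homomorphism of commutative rings and a ∈ A an element such that the induced map A/aA → A'/f(a)A' is bijective and f restricts to a bijection from the a-torsion of A onto the f(a)-torsion of A'. Then the sequence of abelian groups 0 → A → A' ⊕ A[1/a] → A'[1/f(a)] → 0 is exact, where the first map sends x to (f(x), x/1) and the second map sends (y, z) to y/1 − (image of z under the localized map A[1/a] → A'[1/f(a)] induced by f). In particular, A is the fiber product A' ×_{A'[1/f(a)]} A[1/a], and the difference map A' ⊕ A[1/a] → A'[1/f(a)] is surjective. (This is the 0-truncated case of the paper's derived Beauville–Laszlo lemma.) -/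
universe u

/-- The span of `{a}` is contained in the preimage of the span of `{f a}`. -/
theorem span_singleton_le_comap_span_singleton_image
    {A A' : Type u} [CommRing A] [CommRing A'] (f : A →+* A') (a : A) :
    Ideal.span {a} ≤ (Ideal.span {f a}).comap f := by
  rw [Ideal.span_le]
  rintro x hx
  rw [Set.mem_singleton_iff] at hx
  subst hx
  exact Ideal.mem_comap.mpr (Ideal.subset_span (Set.mem_singleton _))

/-!
The hypotheses on `f` say that the square formed by `f` and multiplication by `a` is bicartesian,
i.e. that `0 → A → A' ⊕ A → A' → 0` is exact. Pasting copies of this square gives the same for every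
power of `a`. Since `A[1/a]` is the colimit of `A → A → A → ⋯` along multiplication by `a`, any
element or relation in the localized square already lives at a finite stage, where it is governed
by the square of some `aⁿ`.
-/

section Square

variable {M' N' P' M N P : Type*} [AddCommGroup M'] [AddCommGroup N'] [AddCommGroup P']
  [AddCommGroup M] [AddCommGroup N] [AddCommGroup P]

/-- The square of abelian groups with top `t : M → N`, bottom `b : M' → N'` and vertical maps
`l : M → M'`, `r : N → N'` is bicartesian (a pullback and a pushout): the sequence
`0 → M → M' ⊕ N → N' → 0` with maps `x ↦ (l x, t x)` and `(y, z) ↦ b y - r z` is exact.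
Commutativity of the square is part of `exact`. -/
structure IsBicartesian (t : M →+ N) (l : M →+ M') (r : N →+ N') (b : M' →+ N') : Prop where
  injective : Function.Injective fun x => (l x, t x)
  exact : ∀ y z, b y = r z ↔ ∃ x, l x = y ∧ t x = z
  surjective : Function.Surjective fun yz : M' × N => b yz.1 - r yz.2

namespace IsBicartesian

variable {t : M →+ N} {l : M →+ M'} {r : N →+ N'} {b : M' →+ N'}

theorem comm (h : IsBicartesian t l r b) (x : M) : b (l x) = r (t x) :=
  (h.exact _ _).2 ⟨x, rfl, rfl⟩

theorem eq_zero (h : IsBicartesian t l r b) {x : M} (hl : l x = 0) (ht : t x = 0) : x = 0 :=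
  h.injective (by simp [hl, ht])

theorem mk_of_comm (comm : ∀ x, b (l x) = r (t x)) (eq_zero : ∀ x, l x = 0 → t x = 0 → x = 0)
    (exists_lift : ∀ y z, b y = r z → ∃ x, l x = y ∧ t x = z)
    (exists_sub : ∀ u, ∃ y z, b y - r z = u) : IsBicartesian t l r b where
  injective := (injective_iff_map_eq_zero (l.prod t)).2 fun x hx =>
    eq_zero x (congrArg Prod.fst hx) (congrArg Prod.snd hx)
  exact y z := ⟨exists_lift y z, by rintro ⟨x, rfl, rfl⟩; exact comm x⟩
  surjective u := let ⟨y, z, h⟩ := exists_sub u; ⟨(y, z), h⟩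

theorem id_horiz (l : M →+ M') : IsBicartesian (.id M) l l (.id M') :=
  mk_of_comm (fun _ => rfl) (fun _ _ h => h) (fun _ z h => ⟨z, h.symm, rfl⟩)
    fun u => ⟨u, 0, by simp⟩

theorem paste_horiz {t' : N →+ P} {r' : P →+ P'} {b' : N' →+ P'} (h : IsBicartesian t l r b)
    (h' : IsBicartesian t' r r' b') : IsBicartesian (t'.comp t) l r' (b'.comp b) := by
  refine mk_of_comm (fun x => ?_) (fun x hl ht => ?_) (fun y z hyz => ?_) fun u => ?_
  · simp only [AddMonoidHom.comp_apply, h.comm, h'.comm]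
  · exact h.eq_zero hl (h'.eq_zero (by rw [← h.comm, hl, map_zero]) ht)
  · obtain ⟨x', hx', rfl⟩ := (h'.exact _ _).1 hyz
    obtain ⟨x, rfl, rfl⟩ := (h.exact _ _).1 hx'.symm
    exact ⟨x, rfl, rfl⟩
  · obtain ⟨⟨y', z'⟩, rfl⟩ := h'.surjective u
    obtain ⟨⟨y, z⟩, rfl⟩ := h.surjective y'
    refine ⟨y, t' z + z', ?_⟩
    simp only [AddMonoidHom.comp_apply, map_add, map_sub, h'.comm]
    abel

theorem of_ker_of_range (comm : ∀ x, b (l x) = r (t x)) (ker : Set.BijOn l t.ker b.ker)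
    (range_inj : b.range.comap r ≤ t.range) (range_surj : r.range ⊔ b.range = ⊤) :
    IsBicartesian t l r b := by
  refine mk_of_comm comm (fun x hl ht => ?_) (fun y z hyz => ?_) fun u => ?_
  · exact ker.injOn ht (zero_mem t.ker) (by rw [hl, map_zero])
  · obtain ⟨x, rfl⟩ := range_inj ⟨y, hyz⟩
    obtain ⟨k, hk : t k = 0, hky⟩ := ker.surjOn (show b (y - l x) = 0 by
      rw [map_sub, comm, hyz, sub_self])
    exact ⟨x + k, by rw [map_add, hky, add_sub_cancel], by rw [map_add, hk, add_zero]⟩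
  · obtain ⟨_, ⟨z, rfl⟩, _, ⟨y, rfl⟩, hu⟩ :=
      AddSubgroup.mem_sup.1 (range_surj ▸ AddSubgroup.mem_top u)
    exact ⟨y, -z, by rw [map_neg, sub_neg_eq_add, add_comm, hu]⟩

end IsBicartesian

end Square

section Localization

variable {R R' M M' N N' : Type*} [CommSemiring R] [CommSemiring R'] {f : R →+* R'}
  [AddCommGroup M'] [Module R' M'] [AddCommGroup N'] [Module R' N']
  [AddCommGroup M] [Module R M] [AddCommGroup N] [Module R N]

/-- The scalars `s` for which multiplication by `s` on `M` and by `f s` on `M'` form a bicartesian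
square with two copies of `φ`; equivalently, `φ` induces isomorphisms on the kernels and cokernels
of these multiplications. -/
def bicartesianSubmonoid (φ : M →ₛₗ[f] M') : Submonoid R where
  carrier := {s | IsBicartesian (Module.toAddMonoidEnd R M s) φ.toAddMonoidHom φ.toAddMonoidHom
    (Module.toAddMonoidEnd R' M' (f s))}
  one_mem' := by
    rw [Set.mem_ofPred_eq, map_one, map_one, map_one]
    exact .id_horiz φ.toAddMonoidHom
  mul_mem' {s t} hs ht := by
    rw [Set.mem_ofPred_eq, map_mul, map_mul, map_mul]
    exact ht.paste_horiz hs

theorem beauville_laszlo_exact_sequence_general (S : Submonoid R) {φ : M →ₛₗ[f] M'}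
    (hS : S ≤ bicartesianSubmonoid φ) (i : M →ₗ[R] N) (i' : M' →ₗ[R'] N') [IsLocalizedModule S i]
    [IsLocalizedModule (S.map f) i'] {ψ : N →ₛₗ[f] N'} (hψ : ∀ x, i' (φ x) = ψ (i x)) :
    IsBicartesian i.toAddMonoidHom φ.toAddMonoidHom ψ.toAddMonoidHom i'.toAddMonoidHom := by
  refine .mk_of_comm hψ (fun x hφ hi => ?_) (fun y z hyz => ?_) fun u => ?_
  · obtain ⟨s, hs⟩ := IsLocalizedModule.exists_of_eq (S := S) (hi.trans (map_zero i).symm)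
    exact (hS s.2).eq_zero hφ (hs.trans (smul_zero s))
  · obtain ⟨⟨x, s⟩, hz : (s : R) • z = i x⟩ := IsLocalizedModule.surj S i z
    have hxy : i' (f s • y) = i' (φ x) := by
      rw [map_smul, hψ, ← hz, map_smulₛₗ]
      exact congrArg (f s • ·) hyz
    obtain ⟨⟨_, t, ht, rfl⟩, hxy' : f t • f s • y = f t • φ x⟩ :=
      IsLocalizedModule.exists_of_eq (S := S.map f) hxy
    obtain ⟨x', rfl, hx' : (t * s) • x' = t • x⟩ :=
      ((hS (S.mul_mem ht s.2)).exact y (t • x)).1 <|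
        show f (t * s) • y = φ (t • x) by rw [map_mul, mul_smul, hxy', map_smulₛₗ]
    refine ⟨x', rfl, IsLocalizedModule.smul_injective i (⟨t, ht⟩ * s) ?_⟩
    change (t * (s : R)) • i x' = (t * (s : R)) • z
    rw [← map_smul, hx', map_smul, mul_smul, hz]
  · obtain ⟨⟨y, _, s, hs, rfl⟩, hu : f s • u = i' y⟩ := IsLocalizedModule.surj (S.map f) i' u
    obtain ⟨⟨w, x⟩, rfl : f s • w - φ x = y⟩ := (hS hs).surjective y
    obtain ⟨z, hz : s • z = i x⟩ :=
      ((Module.End.isUnit_iff _).1 (IsLocalizedModule.map_units i ⟨s, hs⟩)).2 (i x)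
    refine ⟨w, z, IsLocalizedModule.smul_injective i' ⟨f s, Submonoid.mem_map_of_mem f hs⟩ ?_⟩
    change f s • (i' w - ψ z) = f s • u
    rw [smul_sub, ← map_smulₛₗ ψ, hz, hu, map_sub, map_smul, hψ]

end Localization

theorem range_toAddMonoidEnd_self {A : Type*} [CommRing A] (a : A) :
    AddMonoidHom.range (Module.toAddMonoidEnd A A a) = (Ideal.span {a}).toAddSubgroup := by
  ext x
  exact (exists_congr fun _ => eq_comm).trans Ideal.mem_span_singleton.symm

theorem comap_le_of_quotientMap_injective {A A' : Type*} [Ring A] [Ring A'] {f : A →+* A'}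
    {I : Ideal A} {J : Ideal A'} [I.IsTwoSided] [J.IsTwoSided] {h : I ≤ J.comap f}
    (hinj : Function.Injective (Ideal.quotientMap J f h)) :
    J.comap f ≤ I := fun x hx => by
  rw [← Ideal.Quotient.eq_zero_iff_mem]
  apply hinj
  rwa [Ideal.quotientMap_mk, map_zero, Ideal.Quotient.eq_zero_iff_mem]

theorem range_sup_eq_top_of_quotientMap_surjective {A A' : Type*} [Ring A] [Ring A'] {f : A →+* A'}
    {I : Ideal A} {J : Ideal A'} [I.IsTwoSided] [J.IsTwoSided] {h : I ≤ J.comap f}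
    (hsurj : Function.Surjective (Ideal.quotientMap J f h)) :
    f.toAddMonoidHom.range ⊔ J.toAddSubgroup = ⊤ := by
  refine eq_top_iff.2 fun y _ => ?_
  obtain ⟨q, hq⟩ := hsurj (Ideal.Quotient.mk J y)
  obtain ⟨x, rfl⟩ := Ideal.Quotient.mk_surjective q
  rw [Ideal.quotientMap_mk, eq_comm, Ideal.Quotient.eq] at hq
  exact AddSubgroup.mem_sup.2 ⟨f x, ⟨x, rfl⟩, y - f x, hq, add_sub_cancel _ _⟩

theorem mem_bicartesianSubmonoid_of_bijective {A A' : Type*} [CommRing A] [CommRing A']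
    {f : A →+* A'} {a : A} {h : Ideal.span {a} ≤ (Ideal.span {f a}).comap f}
    (hquot : Function.Bijective (Ideal.quotientMap (Ideal.span {f a}) f h))
    {hmul : ∀ x : {x : A // a * x = 0}, f a * f x = 0}
    (htors : Function.Bijective fun x : {x : A // a * x = 0} =>
      (⟨f x, hmul x⟩ : {y : A' // f a * y = 0})) :
    a ∈ bicartesianSubmonoid f.toSemilinearMap := by
  have hmaps : Set.MapsTo f {x | a * x = 0} {y | f a * y = 0} := fun x hx => hmul ⟨x, hx⟩
  have hker : Set.BijOn f {x | a * x = 0} {y | f a * y = 0} :=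
    ⟨hmaps, hmaps.restrict_inj.1 htors.1, hmaps.restrict_surjective_iff.1 htors.2⟩
  refine .of_ker_of_range (fun x => (map_mul f a x).symm) hker ?_ ?_
  · rw [range_toAddMonoidEnd_self, range_toAddMonoidEnd_self]
    exact comap_le_of_quotientMap_injective hquot.1
  · rw [range_toAddMonoidEnd_self]
    exact range_sup_eq_top_of_quotientMap_surjective hquot.2

theorem isLocalizedModule_map_powers {A A' : Type*} [CommSemiring A] [CommSemiring A']
    (f : A →+* A') (a : A) (B' : Type*) [CommSemiring B'] [Algebra A' B']
    [IsLocalization.Away (f a) B'] :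
    IsLocalizedModule ((Submonoid.powers a).map f) (Algebra.linearMap A' B') := by
  rw [Submonoid.map_powers]
  infer_instance

/-- The localized ring homomorphism `B → B'` of `f : A → A'` away from `a`, as an `f`-semilinear
map of modules. -/
noncomputable def awayMapSemilinear {A A' : Type*} [CommSemiring A] [CommSemiring A']
    (f : A →+* A') (a : A) (B B' : Type*) [CommSemiring B] [Algebra A B] [IsLocalization.Away a B]
    [CommSemiring B'] [Algebra A' B'] [IsLocalization.Away (f a) B'] : B →ₛₗ[f] B' where
  __ := IsLocalization.Away.map B B' f a
  map_smul' c z := by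
    simp [Algebra.smul_def, IsLocalization.Away.map, IsLocalization.map_eq]

theorem awayMapSemilinear_algebraMap {A A' : Type*} [CommSemiring A] [CommSemiring A']
    (f : A →+* A') (a : A) (B B' : Type*) [CommSemiring B] [Algebra A B] [IsLocalization.Away a B]
    [CommSemiring B'] [Algebra A' B'] [IsLocalization.Away (f a) B'] (x : A) :
    awayMapSemilinear f a B B' (algebraMap A B x) = algebraMap A' B' (f x) := by
  simp [awayMapSemilinear, IsLocalization.Away.map]

/-- Beauville–Laszlo glueing (0-truncated case): if `f : A → A'` induces a bijection
`A/aA ≅ A'/f(a)A'` and a bijection on `a`-torsion, then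
`0 → A → A' ⊕ A[1/a] → A'[1/f(a)] → 0` is exact; in particular
`A ≅ A' ×_{A'[1/f(a)]} A[1/a]`, and the difference map is surjective. -/
theorem beauville_laszlo_exact_sequence
    {A A' : Type u} [CommRing A] [CommRing A'] (f : A →+* A') (a : A)
    (hquot : Function.Bijective
      (Ideal.quotientMap (I := Ideal.span {a}) (Ideal.span {f a}) f
        (span_singleton_le_comap_span_singleton_image f a)))
    (htors : Function.Bijective (fun x : {x : A // a * x = 0} =>
      (⟨f x.1, by rw [← map_mul, x.2, map_zero]⟩ : {y : A' // f a * y = 0}))) :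
    Function.Injective (fun x : A =>
      ((f x, algebraMap A (Localization.Away a) x) : A' × Localization.Away a)) ∧
    (∀ (y : A') (z : Localization.Away a),
      algebraMap A' (Localization.Away (f a)) y =
        IsLocalization.Away.map (Localization.Away a) (Localization.Away (f a)) f a z ↔
      ∃ x : A, f x = y ∧ algebraMap A (Localization.Away a) x = z) ∧
    Function.Surjective (fun yz : A' × Localization.Away a =>
      algebraMap A' (Localization.Away (f a)) yz.1 -
        IsLocalization.Away.map (Localization.Away a) (Localization.Away (f a)) f a yz.2) := by
  have := isLocalizedModule_map_powers f a (Localization.Away (f a))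
  have h := beauville_laszlo_exact_sequence_general (Submonoid.powers a)
    (Submonoid.powers_le.2 (mem_bicartesianSubmonoid_of_bijective hquot htors))
    (Algebra.linearMap A (Localization.Away a)) (Algebra.linearMap A' (Localization.Away (f a)))
    fun x => (awayMapSemilinear_algebraMap f a _ _ x).symm
  exact ⟨h.injective, h.exact, h.surjective⟩
end

section
/- Let f : A → A' be a homomorphism of commutative rings and a ∈ A an element such that the induced map A/aA → A'/f(a)A' is bijective and f restricts to a bijection from the a-torsion of A onto the f(a)-torsion of A'. Then for every n ≥ 1 the induced map A/aⁿA → A'/f(a)ⁿA' is bijective and f restricts to a bijection from the aⁿ-torsion of A onto the f(a)ⁿ-torsion of A'. (This says: an isomorphism on derived quotients A/^L a ≅ A'/^L a implies one on A/^L aⁿ ≅ A'/^L aⁿ for all n.) -/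
universe u

/-- The span of `{aⁿ}` is contained in the preimage under `f` of the span of `{f(a)ⁿ}`. -/
theorem span_pow_le_comap_span_pow_image
    {A A' : Type u} [CommRing A] [CommRing A'] (f : A →+* A') (a : A) (n : ℕ) :
    Ideal.span {a ^ n} ≤ (Ideal.span {f a ^ n}).comap f := by
  rw [Ideal.span_le]
  rintro x hx
  rw [Set.mem_singleton_iff] at hx
  subst hx
  rw [SetLike.mem_coe, Ideal.mem_comap, map_pow]
  exact Ideal.subset_span (Set.mem_singleton _)

/-!
For scalars `a` and `b`, multiplication by `a * b` on a module `M` factors as multiplication by `b`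
followed by multiplication by `a`, which gives the exact sequence
`0 → M[b] → M[a * b] → M[a] → M/bM → M/abM → M/aM → 0`, whose connecting map sends an
`a`-torsion element to its class modulo `b`. By the five lemma, a map that is bijective on the
four terms for `a` and for `b` is bijective on the two terms for `a * b`. Powers follow by
induction.
-/

open Function Set

section Semilinear

variable {R S M N : Type*} [Semiring R] [Semiring S] [AddCommGroup M] [AddCommGroup N]
  [Module R M] [Module S N] {σ : R →+* S} {g : M →ₛₗ[σ] N} {a b : R}

theorem injOn_torsion_mul (ha : InjOn g {x | a • x = 0}) (hb : InjOn g {x | b • x = 0}) :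
    InjOn g {x | (a * b) • x = 0} := by
  intro x (hx : (a * b) • x = 0) y (hy : (a * b) • y = 0) hxy
  have smul_eq : b • x = b • y :=
    ha (by rwa [mem_ofPred_eq, smul_smul]) (by rwa [mem_ofPred_eq, smul_smul])
      (by rw [map_smulₛₗ, map_smulₛₗ, hxy])
  refine sub_eq_zero.mp (hb ?_ (smul_zero b) ?_)
  · rw [mem_ofPred_eq, smul_sub, smul_eq, sub_self]
  · rw [map_sub, hxy, sub_self, map_zero]

theorem surjOn_torsion_mul
    (hquot : g ⁻¹' range (σ b • · : N → N) ⊆ range (b • · : M → M))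
    (ha : SurjOn g {x | a • x = 0} {y | σ a • y = 0})
    (hb : SurjOn g {x | b • x = 0} {y | σ b • y = 0}) :
    SurjOn g {x | (a * b) • x = 0} {y | σ (a * b) • y = 0} := by
  intro y (hy : σ (a * b) • y = 0)
  rw [map_mul, mul_smul] at hy
  obtain ⟨u, hu : a • u = 0, hgu⟩ := ha hy
  obtain ⟨v, rfl : b • v = u⟩ := hquot ⟨y, hgu.symm⟩
  have sub_torsion : σ b • (y - g v) = 0 := by rw [smul_sub, ← hgu, map_smulₛₗ, sub_self]
  obtain ⟨w, hw : b • w = 0, hgw⟩ := hb sub_torsion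
  refine ⟨v + w, ?_, by rw [map_add, hgw, add_sub_cancel]⟩
  rw [mem_ofPred_eq, mul_smul, smul_add, hw, add_zero, hu]

theorem preimage_range_smul_mul_subset
    (ha : g ⁻¹' range (σ a • · : N → N) ⊆ range (a • · : M → M))
    (htors : SurjOn g {x | a • x = 0} {y | σ a • y = 0})
    (hb : g ⁻¹' range (σ b • · : N → N) ⊆ range (b • · : M → M)) :
    g ⁻¹' range (σ (a * b) • · : N → N) ⊆ range ((a * b) • · : M → M) := by
  rintro x ⟨z, hz : σ (a * b) • z = g x⟩
  rw [map_mul, mul_smul] at hz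
  obtain ⟨v, rfl : a • v = x⟩ := ha ⟨σ b • z, hz⟩
  have sub_torsion : σ a • (g v - σ b • z) = 0 := by rw [smul_sub, hz, map_smulₛₗ, sub_self]
  obtain ⟨w, hw : a • w = 0, hgw⟩ := htors sub_torsion
  have map_sub_eq : σ b • z = g (v - w) := by rw [map_sub, hgw, sub_sub_cancel]
  obtain ⟨t, ht : b • t = v - w⟩ := hb ⟨z, map_sub_eq⟩
  refine ⟨t, ?_⟩
  dsimp only
  rw [mul_smul, ht, smul_sub, hw, sub_zero]

theorem exists_sub_mem_range_smul_mul
    (ha : ∀ y, ∃ x, y - g x ∈ range (σ a • · : N → N))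
    (hb : ∀ y, ∃ x, y - g x ∈ range (σ b • · : N → N)) (y : N) :
    ∃ x, y - g x ∈ range (σ (a * b) • · : N → N) := by
  obtain ⟨x, z, hz : σ a • z = y - g x⟩ := ha y
  obtain ⟨x', z', hz' : σ b • z' = z - g x'⟩ := hb z
  refine ⟨x + a • x', z', ?_⟩
  dsimp only
  rw [map_mul, mul_smul, hz', smul_sub, hz, map_add, map_smulₛₗ, sub_sub]

/-- `g : M → N` is an isomorphism on derived quotients modulo `a`: the induced map
`M/aM → N/σ(a)N` is bijective, and `g` restricts to a bijection from the `a`-torsion of `M` onto the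
`σ(a)`-torsion of `N`. Injectivity and surjectivity of the map on quotients are expressed through
representatives, since `aM` need not be a submodule when `R` is noncommutative. -/
structure IsDerivedQuotientIso (g : M →ₛₗ[σ] N) (a : R) : Prop where
  preimage_range_smul_subset : g ⁻¹' range (σ a • · : N → N) ⊆ range (a • · : M → M)
  exists_sub_mem_range_smul : ∀ y, ∃ x, y - g x ∈ range (σ a • · : N → N)
  bijOn_torsion : BijOn g {x | a • x = 0} {y | σ a • y = 0}

theorem mapsTo_torsion (g : M →ₛₗ[σ] N) (a : R) :
    MapsTo g {x | a • x = 0} {y | σ a • y = 0} := by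
  intro x (hx : a • x = 0)
  rw [mem_ofPred_eq, ← map_smulₛₗ, hx, map_zero]

namespace IsDerivedQuotientIso

theorem one (g : M →ₛₗ[σ] N) : IsDerivedQuotientIso g 1 where
  preimage_range_smul_subset x _ := ⟨x, one_smul R x⟩
  exists_sub_mem_range_smul y := ⟨0, y, by simp⟩
  bijOn_torsion := by simp

theorem mul (ha : IsDerivedQuotientIso g a) (hb : IsDerivedQuotientIso g b) :
    IsDerivedQuotientIso g (a * b) where
  preimage_range_smul_subset :=
    preimage_range_smul_mul_subset ha.preimage_range_smul_subset ha.bijOn_torsion.surjOn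
      hb.preimage_range_smul_subset
  exists_sub_mem_range_smul :=
    exists_sub_mem_range_smul_mul ha.exists_sub_mem_range_smul hb.exists_sub_mem_range_smul
  bijOn_torsion :=
    ⟨mapsTo_torsion g (a * b),
      injOn_torsion_mul ha.bijOn_torsion.injOn hb.bijOn_torsion.injOn,
      surjOn_torsion_mul hb.preimage_range_smul_subset ha.bijOn_torsion.surjOn
        hb.bijOn_torsion.surjOn⟩

end IsDerivedQuotientIso

theorem derived_quotient_pow_iso_of_derived_quotient_iso_general
    (h : IsDerivedQuotientIso g a) (n : ℕ) : IsDerivedQuotientIso g (a ^ n) := by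
  induction n with
  | zero => simpa only [pow_zero] using IsDerivedQuotientIso.one g
  | succ n ih => simpa only [pow_succ] using ih.mul h

end Semilinear

section QuotientMap

variable {A B : Type*} [Ring A] [Ring B] {f : A →+* B} {I : Ideal A} {J : Ideal B}
  [I.IsTwoSided] [J.IsTwoSided]

theorem quotientMap_injective_iff (h : I ≤ J.comap f) :
    Injective (Ideal.quotientMap J f h) ↔ J.comap f ≤ I := by
  refine ⟨fun hinj x hx ↦ ?_, Ideal.quotientMap_injective'⟩
  rw [← Ideal.Quotient.eq_zero_iff_mem]
  apply hinj
  rwa [Ideal.quotientMap_mk, map_zero, Ideal.Quotient.eq_zero_iff_mem]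

theorem quotientMap_surjective_iff (h : I ≤ J.comap f) :
    Surjective (Ideal.quotientMap J f h) ↔ ∀ y, ∃ x, y - f x ∈ J := by
  simp only [Surjective, Ideal.Quotient.mk_surjective.forall, Ideal.Quotient.mk_surjective.exists,
    Ideal.quotientMap_mk]
  exact forall_congr' fun y ↦ exists_congr fun x ↦ by rw [eq_comm, Ideal.Quotient.eq]

end QuotientMap

theorem coe_span_singleton_eq_range_smul {A : Type*} [CommSemiring A] (c : A) :
    (Ideal.span {c} : Set A) = range (c • · : A → A) := by
  ext x
  simp only [SetLike.mem_coe, Ideal.mem_span_singleton', mem_range, smul_eq_mul, mul_comm c]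

theorem isDerivedQuotientIso_toSemilinearMap_iff {A B : Type*} [CommRing A] [CommRing B]
    {f : A →+* B} {c : A} {d : B} (hd : f c = d)
    (hspan : Ideal.span {c} ≤ (Ideal.span {d}).comap f)
    (htors : MapsTo f {x | c * x = 0} {y | d * y = 0}) :
    IsDerivedQuotientIso f.toSemilinearMap c ↔
      Bijective (Ideal.quotientMap (Ideal.span {d}) f hspan) ∧
        Bijective (htors.restrict f {x | c * x = 0} {y | d * y = 0}) := by
  subst hd
  have injective_iff : Injective (Ideal.quotientMap (Ideal.span {f c}) f hspan) ↔
      f ⁻¹' range (f c • · : B → B) ⊆ range (c • · : A → A) := by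
    rw [quotientMap_injective_iff, ← SetLike.coe_subset_coe, Ideal.coe_comap,
      coe_span_singleton_eq_range_smul, coe_span_singleton_eq_range_smul]
  have surjective_iff : Surjective (Ideal.quotientMap (Ideal.span {f c}) f hspan) ↔
      ∀ y, ∃ x, y - f x ∈ range (f c • · : B → B) := by
    simp only [quotientMap_surjective_iff, ← coe_span_singleton_eq_range_smul, SetLike.mem_coe]
  rw [Bijective, Bijective, injective_iff, surjective_iff, htors.restrict_inj,
    htors.restrict_surjective_iff]
  exact ⟨fun h ↦ ⟨⟨h.1, h.2⟩, h.3.injOn, h.3.surjOn⟩,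
    fun ⟨⟨hinj, hsurj⟩, htinj, htsurj⟩ ↦ ⟨hinj, hsurj, htors, htinj, htsurj⟩⟩

/-- If `f : A → A'` induces a bijection `A/aA ≅ A'/f(a)A'` and a bijection on `a`-torsion
(that is, an isomorphism on derived quotients `A/^L a ≅ A'/^L a`), then for every `n ≥ 1` it
induces a bijection `A/aⁿA ≅ A'/f(a)ⁿA'` and a bijection on `aⁿ`-torsion (that is, an
isomorphism `A/^L aⁿ ≅ A'/^L aⁿ`). -/
theorem derived_quotient_pow_iso_of_derived_quotient_iso
    {A A' : Type u} [CommRing A] [CommRing A'] (f : A →+* A') (a : A)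
    (hquot : Function.Bijective
      (Ideal.quotientMap (I := Ideal.span {a ^ 1}) (Ideal.span {f a ^ 1}) f
        (span_pow_le_comap_span_pow_image f a 1)))
    (htors : Function.Bijective (fun x : {x : A // a ^ 1 * x = 0} =>
      (⟨f x.1, by rw [← map_pow, ← map_mul, x.2, map_zero]⟩ : {y : A' // f a ^ 1 * y = 0}))) :
    ∀ n : ℕ, 1 ≤ n →
      Function.Bijective
        (Ideal.quotientMap (I := Ideal.span {a ^ n}) (Ideal.span {f a ^ n}) f
          (span_pow_le_comap_span_pow_image f a n)) ∧
      Function.Bijective (fun x : {x : A // a ^ n * x = 0} =>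
        (⟨f x.1, by rw [← map_pow, ← map_mul, x.2, map_zero]⟩ :
          {y : A' // f a ^ n * y = 0})) := by
  have iso_iff (n : ℕ) := isDerivedQuotientIso_toSemilinearMap_iff (map_pow f a n)
    (span_pow_le_comap_span_pow_image f a n)
    (map_pow f a n ▸ mapsTo_torsion f.toSemilinearMap (a ^ n))
  have iso : IsDerivedQuotientIso f.toSemilinearMap a := by
    simpa only [pow_one] using (iso_iff 1).mpr ⟨hquot, htors⟩
  exact fun n _ ↦ (iso_iff n).mp (derived_quotient_pow_iso_of_derived_quotient_iso_general iso n)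
end

section
/- Let p be a prime and A a perfect commutative ring of characteristic p. Then for any a, x ∈ A, if aⁿ·x = 0 for some n ≥ 1, then a·x = 0. In particular, the a-power-torsion of A equals its a-torsion, so A has bounded a^∞-torsion for every element a ∈ A. -/
universe u

theorem isReduced_of_injective_pow {M : Type*} [MonoidWithZero M] {k : ℕ} (hk : 1 < k)
    (hinj : Function.Injective fun y : M ↦ y ^ k) : IsReduced M :=
  (isReduced_iff_pow_one_lt k hk).mpr fun _ hy ↦
    hinj (hy.trans (zero_pow (Nat.ne_zero_of_lt hk)).symm)

theorem mul_eq_zero_of_pow_mul_eq_zero_of_perfect_general {M : Type*} [CommMonoidWithZero M]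
    [IsReduced M] {a x : M} {n : ℕ} (h : a ^ n * x = 0) : a * x = 0 := by
  have hpow : (a * x) ^ (n + 1) = 0 :=
    calc
      (a * x) ^ (n + 1) = (a ^ n * a) * (x * x ^ n) := by rw [mul_pow, pow_succ, pow_succ']
      _ = (a ^ n * x) * (a * x ^ n) := mul_mul_mul_comm ..
      _ = 0 := by rw [h, zero_mul]
  exact eq_zero_of_pow_eq_zero hpow

/-- In a perfect commutative ring `A` of prime characteristic `p`, if `aⁿ · x = 0` for some
`n ≥ 1`, then already `a · x = 0`: the `a`-power-torsion of `A` equals its `a`-torsion, so a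
perfect ring has bounded `a^∞`-torsion for every element `a`. -/
theorem mul_eq_zero_of_pow_mul_eq_zero_of_perfect
    (p : ℕ) [Fact p.Prime] (A : Type u) [CommRing A] [CharP A p] [PerfectRing A p]
    (a x : A) (n : ℕ) (hn : 1 ≤ n) (h : a ^ n * x = 0) : a * x = 0 := by
  have : IsReduced A :=
    isReduced_of_injective_pow (Fact.out : p.Prime).one_lt (injective_frobenius A p)
  exact mul_eq_zero_of_pow_mul_eq_zero_of_perfect_general h
end

section
/- Let p be a prime, A a perfect commutative ring of characteristic p, and A' a commutative A-algebra (necessarily of characteristic p) whose Frobenius endomorphism is surjective (A' is semiperfect). Let a ∈ A be an element such that the structure map A → A' induces a bijection A/aA → A'/aA' and restricts to a bijection from the a-torsion of A onto the a-torsion of A'. Let N ⊆ A' be the kernel of the surjection from A' onto its colimit perfection A'_perf = colim_{x ↦ x^p} A'; since Frobenius of A' is surjective, N equals the nilradical of A'. Then: (i) multiplication by a is bijective on N, i.e. N is uniquely a-divisible; and (ii) the quotient map A' → A'/N induces a bijection A'/aA' → (A'/N)/a·(A'/N) and a bijection from the a-torsion of A' onto the a-torsion of A'/N (so that A'/^L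 a ≅ A'_perf/^L a). -/
/-!
Koszul homology is multiplicative in the element, so `A/^L a ≅ A'/^L a` forces
`A/^L (a ^ q) ≅ A'/^L (a ^ q)` for every power `q = p ^ n`. The `q`-power Frobenius of `A` carries
`A/^L a` isomorphically to `A/^L (a ^ q)` because `A` is perfect, so by two-out-of-three the
`q`-power Frobenius of `A'` carries `A'/^L a` isomorphically to `A'/^L (a ^ q)`. Hence its kernel
is uniquely `a`-divisible, and the nilradical is the union of these kernels. Dividing by a uniquely
`a`-divisible ideal does not change the Koszul homology of `a`.
-/

universe u

/-- `f : A →+* B` is a quasi-isomorphism from the Koszul complex `A --a--> A` to the Koszul complex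
`B --f a--> B`, which is the meaning of `A/^L a ≅ B/^L a`. The conditions are spelled out on
elements: the first two say that `A/aA → B/f(a)B` is injective and surjective, the last two that
the map from the `a`-torsion of `A` to the `f a`-torsion of `B` is. -/
structure IsKoszulQuasiIso {A B : Type*} [CommRing A] [CommRing B] (f : A →+* B) (a : A) :
    Prop where
  dvd_of_map_dvd : ∀ b, f a ∣ f b → a ∣ b
  exists_dvd_sub_map : ∀ y, ∃ b, f a ∣ y - f b
  eq_zero_of_map_eq_zero : ∀ t, a * t = 0 → f t = 0 → t = 0
  exists_map_eq : ∀ y, f a * y = 0 → ∃ t, a * t = 0 ∧ f t = y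

section Bijectivity

variable {A B : Type*} [CommRing A] [CommRing B] {f : A →+* B} {a : A}

theorem bijective_quotientMap_span_singleton_iff
    (h : Ideal.span {a} ≤ (Ideal.span {f a}).comap f) :
    Function.Bijective (Ideal.quotientMap (Ideal.span {f a}) f h) ↔
      (∀ b, f a ∣ f b → a ∣ b) ∧ ∀ y, ∃ b, f a ∣ y - f b := by
  refine and_congr ?_ ?_
  · simp only [injective_iff_map_eq_zero, Ideal.Quotient.mk_surjective.forall,
      Ideal.quotientMap_mk, Ideal.Quotient.eq_zero_iff_mem, Ideal.mem_span_singleton]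
  · simp only [Function.Surjective, Ideal.Quotient.mk_surjective.forall,
      Ideal.Quotient.mk_surjective.exists, Ideal.quotientMap_mk, Ideal.Quotient.eq,
      Ideal.mem_span_singleton, dvd_sub_comm]

theorem bijective_torsion_map_iff :
    Function.Bijective (fun x : {x : A // a * x = 0} =>
      (⟨f x.1, by rw [← map_mul, x.2, map_zero]⟩ : {y : B // f a * y = 0})) ↔
      (∀ t, a * t = 0 → f t = 0 → t = 0) ∧ ∀ y, f a * y = 0 → ∃ t, a * t = 0 ∧ f t = y := by
  refine and_congr ⟨fun hinj t ht hft => ?_, fun h x y hxy => ?_⟩ ?_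
  · exact congrArg Subtype.val
      (@hinj ⟨t, ht⟩ ⟨0, mul_zero a⟩ (Subtype.ext (hft.trans (map_zero f).symm)))
  · refine Subtype.ext (sub_eq_zero.1 (h _ ?_ ?_))
    · rw [mul_sub, x.2, y.2, sub_zero]
    · rw [map_sub, sub_eq_zero]
      exact congrArg Subtype.val hxy
  · simp only [Function.Surjective, Subtype.forall, Subtype.exists, Subtype.mk.injEq, exists_prop]

theorem isKoszulQuasiIso_iff (h : Ideal.span {a} ≤ (Ideal.span {f a}).comap f) :
    IsKoszulQuasiIso f a ↔
      Function.Bijective (Ideal.quotientMap (Ideal.span {f a}) f h) ∧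
      Function.Bijective (fun x : {x : A // a * x = 0} =>
        (⟨f x.1, by rw [← map_mul, x.2, map_zero]⟩ : {y : B // f a * y = 0})) := by
  rw [bijective_quotientMap_span_singleton_iff, bijective_torsion_map_iff]
  exact ⟨fun ⟨h₁, h₂, h₃, h₄⟩ => ⟨⟨h₁, h₂⟩, h₃, h₄⟩, fun ⟨⟨h₁, h₂⟩, h₃, h₄⟩ => ⟨h₁, h₂, h₃, h₄⟩⟩

end Bijectivity

theorem bijOn_mul_left_ideal_iff {R : Type*} [CommRing R] {I : Ideal R} {a : R} :
    Set.BijOn (a * ·) I I ↔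
      (∀ x ∈ I, a * x = 0 → x = 0) ∧ ∀ x ∈ I, ∃ y ∈ I, a * y = x := by
  refine ⟨fun h => ⟨fun x hx hax => h.injOn hx I.zero_mem (hax.trans (mul_zero a).symm),
    h.surjOn⟩, fun ⟨hinj, hsurj⟩ => ⟨fun _ => I.mul_mem_left a, fun x hx y hy hxy => ?_, hsurj⟩⟩
  exact sub_eq_zero.1 (hinj _ (I.sub_mem hx hy) (by rw [mul_sub, sub_eq_zero.2 hxy]))

namespace IsKoszulQuasiIso

variable {A B C : Type*} [CommRing A] [CommRing B] [CommRing C] {f : A →+* B} {g : B →+* C}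
  {a b : A}

theorem bijOn_ker (h : IsKoszulQuasiIso f a) :
    Set.BijOn (a * ·) (RingHom.ker f) (RingHom.ker f) := by
  refine bijOn_mul_left_ideal_iff.2
    ⟨fun x hx hax => h.eq_zero_of_map_eq_zero x hax hx, fun x hx => ?_⟩
  rw [RingHom.mem_ker] at hx
  obtain ⟨y, rfl⟩ := h.dvd_of_map_dvd x (hx ▸ dvd_zero _)
  obtain ⟨t, hat, hft⟩ := h.exists_map_eq (f y) (by rw [← map_mul, hx])
  exact ⟨y - t, by rw [RingHom.mem_ker, map_sub, hft, sub_self], by rw [mul_sub, hat, sub_zero]⟩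

theorem of_surjective (hf : Function.Surjective f)
    (h : Set.BijOn (a * ·) (RingHom.ker f) (RingHom.ker f)) : IsKoszulQuasiIso f a := by
  obtain ⟨hinj, hdiv⟩ := bijOn_mul_left_ideal_iff.1 h
  refine ⟨fun b hb => ?_, hf.forall.2 fun b => ⟨b, ?_⟩, fun t hat ht => hinj t ht hat,
    hf.forall.2 fun y hy => ?_⟩
  · obtain ⟨z, hz⟩ := hb
    obtain ⟨y, rfl⟩ := hf z
    have hker : b - a * y ∈ RingHom.ker f := by
      rw [RingHom.mem_ker, map_sub, map_mul, hz, sub_self]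
    obtain ⟨w, -, hw⟩ := hdiv _ hker
    exact ⟨y + w, by linear_combination -hw⟩
  · rw [sub_self]
    exact dvd_zero _
  · rw [← map_mul, ← RingHom.mem_ker] at hy
    obtain ⟨w, hfw, hw⟩ := hdiv _ hy
    exact ⟨y - w, by rw [mul_sub, hw, sub_self], by rw [map_sub, hfw, sub_zero]⟩

theorem of_bijective (hf : Function.Bijective f) (a : A) : IsKoszulQuasiIso f a := by
  refine of_surjective hf.2 (bijOn_mul_left_ideal_iff.2 ?_)
  simp only [(RingHom.injective_iff_ker_eq_bot f).1 hf.1, Ideal.mem_bot]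
  exact ⟨fun x hx _ => hx, fun x hx => ⟨0, rfl, by rw [hx, mul_zero]⟩⟩

theorem comp (hg : IsKoszulQuasiIso g (f a)) (hf : IsKoszulQuasiIso f a) :
    IsKoszulQuasiIso (g.comp f) a where
  dvd_of_map_dvd b hb := hf.dvd_of_map_dvd b (hg.dvd_of_map_dvd _ hb)
  exists_dvd_sub_map z := by
    obtain ⟨y, hy⟩ := hg.exists_dvd_sub_map z
    obtain ⟨b, hb⟩ := hf.exists_dvd_sub_map y
    refine ⟨b, ?_⟩
    have hgb : g (f a) ∣ g y - g (f b) := by simpa only [map_sub] using map_dvd g hb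
    simpa only [RingHom.comp_apply, sub_add_sub_cancel] using dvd_add hy hgb
  eq_zero_of_map_eq_zero t hat ht :=
    hf.eq_zero_of_map_eq_zero t hat
      (hg.eq_zero_of_map_eq_zero _ (by rw [← map_mul, hat, map_zero]) ht)
  exists_map_eq z hz := by
    obtain ⟨y, hy, rfl⟩ := hg.exists_map_eq z hz
    obtain ⟨t, ht, rfl⟩ := hf.exists_map_eq y hy
    exact ⟨t, ht, rfl⟩

theorem of_comp (hgf : IsKoszulQuasiIso (g.comp f) a) (hf : IsKoszulQuasiIso f a) :
    IsKoszulQuasiIso g (f a) where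
  dvd_of_map_dvd y hy := by
    obtain ⟨b, hb⟩ := hf.exists_dvd_sub_map y
    have hgb : g (f a) ∣ g y - g (f b) := by simpa only [map_sub] using map_dvd g hb
    have hab : a ∣ b := hgf.dvd_of_map_dvd b ((dvd_iff_dvd_of_dvd_sub hgb).1 hy)
    exact (dvd_iff_dvd_of_dvd_sub hb).2 (map_dvd f hab)
  exists_dvd_sub_map z := (hgf.exists_dvd_sub_map z).imp' f fun _ => id
  eq_zero_of_map_eq_zero y hy hgy := by
    obtain ⟨t, ht, rfl⟩ := hf.exists_map_eq y hy
    rw [hgf.eq_zero_of_map_eq_zero t ht hgy, map_zero]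
  exists_map_eq z hz := by
    obtain ⟨t, ht, rfl⟩ := hgf.exists_map_eq z hz
    exact ⟨f t, by rw [← map_mul, ht, map_zero], rfl⟩

theorem mul (ha : IsKoszulQuasiIso f a) (hb : IsKoszulQuasiIso f b) :
    IsKoszulQuasiIso f (a * b) where
  dvd_of_map_dvd c hc := by
    rw [map_mul] at hc
    obtain ⟨d, rfl⟩ := ha.dvd_of_map_dvd c (dvd_of_mul_right_dvd hc)
    obtain ⟨y, hy⟩ := hc
    obtain ⟨t, hat, hft⟩ := ha.exists_map_eq (f d - f b * y) (by
      rw [map_mul] at hy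
      linear_combination hy)
    obtain ⟨e, he⟩ := hb.dvd_of_map_dvd (d - t) ⟨y, by rw [map_sub, hft, sub_sub_cancel]⟩
    exact ⟨e, by linear_combination a * he + hat⟩
  exists_dvd_sub_map x := by
    obtain ⟨c, y, hy⟩ := ha.exists_dvd_sub_map x
    obtain ⟨d, z, hz⟩ := hb.exists_dvd_sub_map y
    refine ⟨c + a * d, z, ?_⟩
    simp only [map_add, map_mul]
    linear_combination hy + f a * hz
  eq_zero_of_map_eq_zero t hat hft := by
    have hbt : b * t = 0 := ha.eq_zero_of_map_eq_zero (b * t) (by rw [← mul_assoc, hat])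
      (by rw [map_mul, hft, mul_zero])
    exact hb.eq_zero_of_map_eq_zero t hbt hft
  exists_map_eq y hy := by
    rw [map_mul, mul_assoc] at hy
    obtain ⟨t, hat, hft⟩ := ha.exists_map_eq (f b * y) hy
    obtain ⟨s, rfl⟩ := hb.dvd_of_map_dvd t ⟨y, hft⟩
    obtain ⟨u, hbu, hfu⟩ := hb.exists_map_eq (y - f s) (by
      rw [map_mul] at hft
      linear_combination -hft)
    exact ⟨s + u, by linear_combination hat + a * hbu, by rw [map_add, hfu, add_sub_cancel]⟩

theorem one : IsKoszulQuasiIso f 1 where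
  dvd_of_map_dvd b _ := one_dvd b
  exists_dvd_sub_map y := ⟨0, by simp only [map_one, one_dvd]⟩
  eq_zero_of_map_eq_zero t ht _ := by rwa [one_mul] at ht
  exists_map_eq y hy := ⟨0, mul_zero 1, by rwa [map_one, one_mul, eq_comm, ← map_zero f] at hy⟩

theorem pow (h : IsKoszulQuasiIso f a) (n : ℕ) : IsKoszulQuasiIso f (a ^ n) := by
  induction n with
  | zero => exact pow_zero a ▸ one
  | succ n ih => exact pow_succ a n ▸ ih.mul h

section Frobenius

variable (p : ℕ) [ExpChar A p] [PerfectRing A p] [ExpChar B p]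

theorem iterateFrobenius_map (h : IsKoszulQuasiIso f a) (n : ℕ) :
    IsKoszulQuasiIso (iterateFrobenius B p n) (f a) := by
  have hpow : IsKoszulQuasiIso f (iterateFrobenius A p n a) := h.pow (p ^ n)
  have hcomp := hpow.comp (of_bijective (bijective_iterateFrobenius A p n) a)
  rw [f.iterateFrobenius_comm p n] at hcomp
  exact hcomp.of_comp h

theorem bijOn_pNilradical (h : IsKoszulQuasiIso f a) :
    Set.BijOn (f a * ·) (pNilradical B p) (pNilradical B p) := by
  have hker (n : ℕ) := bijOn_mul_left_ideal_iff.1 (h.iterateFrobenius_map p n).bijOn_ker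
  refine bijOn_mul_left_ideal_iff.2 ⟨fun x hx hax => ?_, fun x hx => ?_⟩ <;>
    obtain ⟨n, hn⟩ := mem_pNilradical.1 hx
  · exact (hker n).1 x hn hax
  · obtain ⟨y, hy, hay⟩ := (hker n).2 x hn
    exact ⟨y, mem_pNilradical.2 ⟨n, hy⟩, hay⟩

end Frobenius

theorem bijOn_nilradical (p : ℕ) [Fact p.Prime] [CharP A p] [PerfectRing A p]
    (h : IsKoszulQuasiIso f a) :
    Set.BijOn (f a * ·) (nilradical B) (nilradical B) := by
  have hp : p.Prime := Fact.out
  rcases subsingleton_or_nontrivial B with hB | hB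
  · exact bijOn_mul_left_ideal_iff.2
      ⟨fun _ _ _ => Subsingleton.elim _ _, fun x hx => ⟨x, hx, Subsingleton.elim _ _⟩⟩
  · have : CharP B p := (CharP.charP_iff_prime_eq_zero hp).2 (by
      rw [← map_natCast f, CharP.cast_eq_zero, map_zero])
    rw [← pNilradical_eq_nilradical hp.one_lt]
    exact h.bijOn_pNilradical p

end IsKoszulQuasiIso

theorem nilradical_uniquely_divisible_and_perfection_mod_a_general
    (p : ℕ) [Fact p.Prime] {A B : Type*} [CommRing A] [CommRing B] [CharP A p] [PerfectRing A p]
    {f : A →+* B} {a : A} (h : IsKoszulQuasiIso f a) :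
    Set.BijOn (f a * ·) (nilradical B) (nilradical B) ∧
      IsKoszulQuasiIso (Ideal.Quotient.mk (nilradical B)) (f a) := by
  have hN := h.bijOn_nilradical p
  exact ⟨hN, .of_surjective Ideal.Quotient.mk_surjective (by rwa [Ideal.mk_ker])⟩

/-- Let `A` be a perfect ring of prime characteristic `p`, let `A'` be a semiperfect
`A`-algebra (its Frobenius is surjective), and let `a ∈ A` be such that `A → A'` induces a
bijection `A/aA ≅ A'/aA'` and a bijection on `a`-torsion. Let `N` be the kernel of the
surjection of `A'` onto its colimit perfection, which (as Frobenius of `A'` is surjective)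
is the nilradical of `A'`. Then (i) multiplication by `a` is bijective on `N`, i.e. `N` is
uniquely `a`-divisible, and (ii) the quotient map `A' → A'/N = A'_perf` induces a bijection
modulo `a` and a bijection on `a`-torsion (so that `A'/^L a ≅ A'_perf/^L a`). -/
theorem nilradical_uniquely_divisible_and_perfection_mod_a
    (p : ℕ) [Fact p.Prime] {A A' : Type u} [CommRing A] [CommRing A']
    [CharP A p] [PerfectRing A p] [Algebra A A']
    (hsemi : Function.Surjective (fun x : A' => x ^ p))
    (a : A)
    (hquot : Function.Bijective
      (Ideal.quotientMap (I := Ideal.span {a}) (Ideal.span {algebraMap A A' a})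
        (algebraMap A A') (span_singleton_le_comap_span_singleton_image (algebraMap A A') a)))
    (htors : Function.Bijective (fun x : {x : A // a * x = 0} =>
      (⟨algebraMap A A' x.1, by rw [← map_mul, x.2, map_zero]⟩ :
        {y : A' // algebraMap A A' a * y = 0}))) :
    Function.Bijective (fun x : nilradical A' =>
      (⟨algebraMap A A' a * x.1, Ideal.mul_mem_left _ _ x.2⟩ : nilradical A')) ∧
    Function.Bijective
      (Ideal.quotientMap (I := Ideal.span {algebraMap A A' a})
        (Ideal.span {Ideal.Quotient.mk (nilradical A') (algebraMap A A' a)})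
        (Ideal.Quotient.mk (nilradical A'))
        (span_singleton_le_comap_span_singleton_image
          (Ideal.Quotient.mk (nilradical A')) (algebraMap A A' a))) ∧
    Function.Bijective (fun y : {y : A' // algebraMap A A' a * y = 0} =>
      (⟨Ideal.Quotient.mk (nilradical A') y.1, by rw [← map_mul, y.2, map_zero]⟩ :
        {z : A' ⧸ nilradical A' //
          Ideal.Quotient.mk (nilradical A') (algebraMap A A' a) * z = 0})) := by
  obtain ⟨hN, hred⟩ := nilradical_uniquely_divisible_and_perfection_mod_a_general p
    ((isKoszulQuasiIso_iff _).2 ⟨hquot, htors⟩)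
  exact ⟨hN.bijective, (isKoszulQuasiIso_iff _).1 hred⟩
end
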